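/- Let G and Π be groups and (Ψ, f) an abstract kernel for Π and G. Define θ(α,β,γ) := m₂(Ψ(α)(f(β,γ)), f(α,βγ)) − m₂(f(α,β), f(αβ,γ)) ∈ ℓ¹(G×G). Then for all α, β, γ, ζ ∈ Π, the element Ψ(α)_*(θ(β,γ,ζ)) − θ(αβ,γ,ζ) + θ(α,βγ,ζ) − θ(α,β,γζ) + θ(α,β,γ) of ℓ¹(G×G) belongs to the closure of the ℝ-linear span of B₂. (Hence θ induces a bounded 3-cocycle θ̄_{Ψ,f} of Π with coefficients in the reduced ℓ¹-homology H̄₂^{ℓ¹}(G,ℝ), representing the class [θ].) -/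

import Mathlib

noncomputable section

open scoped ENNReal

instance : Fact ((1 : ℝ≥0∞) ≤ 1) := ⟨le_rfl⟩

/-- Dirac element of `ℓ¹(G×G)`. -/
def dirac {G : Type*} [Group G] (x : G × G) : lp (fun _ : G × G => ℝ) 1 :=
  letI := Classical.decEq (G × G)
  lp.single 1 x 1

/-- `m(g) = Σ_{n≥1} 2⁻ⁿ · δ_{(g^{2^{n-1}}, g^{2^{n-1}})} ∈ ℓ¹(G×G)`. -/
def mm {G : Type*} [Group G] (g : G) : lp (fun _ : G × G => ℝ) 1 :=
  ∑' n : ℕ, ((1 : ℝ) / 2) ^ (n + 1) • dirac (g ^ 2 ^ n, g ^ 2 ^ n)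

/-- `m₂(g,h) = δ_{(g,h)} − m(g) + m(gh) − m(h) ∈ ℓ¹(G×G)`. -/
def m2 {G : Type*} [Group G] (g h : G) : lp (fun _ : G × G => ℝ) 1 :=
  dirac (g, h) - mm g + mm (g * h) - mm h

/-- The set of boundary elements of `ℓ¹(G×G)`. -/
def B2 (G : Type*) [Group G] : Set (lp (fun _ : G × G => ℝ) 1) :=
  {x | ∃ a b k : G, x = dirac (b, k) - dirac (a * b, k) + dirac (a, b * k) - dirac (a, b)}

/-- The isometric linear automorphism of `ℓ¹(G×G)` induced by an automorphism `Ψ` of `G`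
acting diagonally on the index set `G × G`. -/
def pushAut {G : Type*} [Group G] (Ψ : G ≃* G) (z : lp (fun _ : G × G => ℝ) 1) :
    lp (fun _ : G × G => ℝ) 1 :=
  ⟨fun uv => z (Ψ.symm uv.1, Ψ.symm uv.2), by
    apply memℓp_gen
    have hz : Summable fun uv : G × G => ‖z uv‖ ^ (1 : ℝ≥0∞).toReal :=
      (lp.memℓp z).summable (by norm_num)
    have he : Summable ((fun uv : G × G => ‖z uv‖ ^ (1 : ℝ≥0∞).toReal) ∘
        fun uv : G × G => ((Ψ.symm uv.1 : G), (Ψ.symm uv.2 : G))) := by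
      exact ((Equiv.prodCongr Ψ.symm.toEquiv Ψ.symm.toEquiv).summable_iff).mpr hz
    exact he⟩

/-- The 3-cochain `θ(α,β,γ) = m₂(Ψ(α)(f(β,γ)), f(α,βγ)) − m₂(f(α,β), f(αβ,γ))`. -/
def thetaChain {G P : Type*} [Group G] [Group P] (Ψ : P → G ≃* G) (f : P → P → G)
    (α β γ : P) : lp (fun _ : G × G => ℝ) 1 :=
  m2 (Ψ α (f β γ)) (f α (β * γ)) - m2 (f α β) (f (α * β) γ)

/-!
In `V := ℓ¹(G×G) / closure (span B₂)` the chain `m₂` becomes a bounded 2-cocycle `ω` of `G` with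
trivial coefficients, and the choice of `m` makes `ω(g, g) = 0`. Boundedness makes `ω` rigid: a
bounded quantity that doubles when its arguments are squared is zero, which gives
`ω(x, g) = ω(xgx⁻¹, x)` and `ω(g, h) = 0` for commuting `g`, `h`. Hence `ω(x, y)` depends only on
the inner automorphisms defined by `x` and `y`.

Let `T(a, b, c)` be the `V`-component of the product of the lifts of `a`, `b`, `c` in the central
extension of `G` by `V` defined by `ω`. Replacing two adjacent entries by two others whose product
defines the same inner automorphism changes `T` by a difference of two values of `ω`. The two
routes of the Eilenberg–Mac Lane argument from
`T(Ψ(α)Ψ(β)(f(γ,ζ)), Ψ(α)(f(β,γζ)), f(α,βγζ))` to `T(f(α,β), f(αβ,γ), f(αβγ,ζ))` consist of such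
replacements and one exchange `(a, x, c) ↦ (x, x⁻¹ax, c)`, which does not change `T`. The
differences along them are the five terms of the coboundary of `θ`.
-/

/-- The obstruction 3-cochain of `(Ψ, f)` built from an arbitrary 2-cochain `ω` of `G`; the cochain
`thetaChain Ψ f` is the case `ω = m2`. -/
def obstructionCochain {G P V : Type*} [Mul G] [Mul P] [Sub V] (ω : G → G → V)
    (Ψ : P → MulAut G) (f : P → P → G) (α β γ : P) : V :=
  ω (Ψ α (f β γ)) (f α (β * γ)) - ω (f α β) (f (α * β) γ)

lemma map_obstructionCochain {G P V W F : Type*} [Mul G] [Mul P] [AddGroup V] [AddGroup W]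
    [FunLike F V W] [AddMonoidHomClass F V W] (T : F) (ω : G → G → V) (Ψ : P → MulAut G)
    (f : P → P → G) (α β γ : P) :
    T (obstructionCochain ω Ψ f α β γ) =
      obstructionCochain (fun g h => T (ω g h)) Ψ f α β γ :=
  map_sub T _ _

section AbstractKernel

variable {G P : Type*} [Group G]

/-- `(Ψ, f)` is an abstract kernel: `Ψ` is multiplicative up to the inner automorphisms defined by
`f`. -/
def IsAbstractKernel [Mul P] (Ψ : P → MulAut G) (f : P → P → G) : Prop :=
  ∀ α β, Ψ α * Ψ β = MulAut.conj (f α β) * Ψ (α * β)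

lemma conj_mulAut_apply (φ : MulAut G) (g : G) :
    MulAut.conj (φ g) = φ * MulAut.conj g * φ⁻¹ := by
  ext x
  simp

namespace IsAbstractKernel

lemma semiconjBy [Mul P] {Ψ : P → MulAut G} {f : P → P → G} (hΨf : IsAbstractKernel Ψ f)
    (α β : P) (g : G) : SemiconjBy (f α β) (Ψ (α * β) g) (Ψ α (Ψ β g)) := by
  have hg : Ψ α (Ψ β g) = f α β * Ψ (α * β) g * (f α β)⁻¹ := DFunLike.congr_fun (hΨf α β) g
  rw [hg]
  exact SemiconjBy.conj_mk _ _

lemma conj_mul_eq_conj_mul [Semigroup P] {Ψ : P → MulAut G} {f : P → P → G}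
    (hΨf : IsAbstractKernel Ψ f) (α β γ : P) :
    MulAut.conj (Ψ α (f β γ) * f α (β * γ)) = MulAut.conj (f α β * f (α * β) γ) := by
  have conj_f (σ τ : P) : MulAut.conj (f σ τ) = Ψ σ * Ψ τ * (Ψ (σ * τ))⁻¹ :=
    eq_mul_inv_of_mul_eq (hΨf σ τ).symm
  simp only [map_mul, conj_mulAut_apply, conj_f, mul_assoc]
  group

end IsAbstractKernel

end AbstractKernel

section BoundedCocycle

lemma eq_zero_of_bounded_of_map_eq_smul {𝕜 X V : Type*} [NormedField 𝕜] [NormedAddCommGroup V]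
    [NormedSpace 𝕜 V] {c : 𝕜} (hc : 1 < ‖c‖) {s : X → X} {d : X → V} {C : ℝ}
    (hC : ∀ x, ‖d x‖ ≤ C) (hd : ∀ x, d (s x) = c • d x) (x : X) : d x = 0 := by
  have d_iterate (n : ℕ) : d (s^[n] x) = c ^ n • d x := by
    induction n with
    | zero => simp
    | succ n ih => rw [Function.iterate_succ_apply', hd, ih, smul_smul, pow_succ']
  by_contra hx
  obtain ⟨n, hn⟩ := pow_unbounded_of_one_lt (C / ‖d x‖) hc
  refine (hC (s^[n] x)).not_gt ?_
  rwa [d_iterate, norm_smul, norm_pow, ← div_lt_iff₀ (norm_pos_iff.mpr hx)]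

/-- A bounded inhomogeneous 2-cocycle with trivial coefficients that vanishes on the diagonal, so
that `g ↦ (0, g)` respects squares in the central extension it defines. -/
structure IsBoundedDiagonalFreeCocycle {G V : Type*} [Mul G] [NormedAddCommGroup V]
    (ω : G → G → V) : Prop where
  cocycle (a b c : G) : ω a b + ω (a * b) c = ω b c + ω a (b * c)
  self (g : G) : ω g g = 0
  bounded : ∃ C : ℝ, ∀ g h, ‖ω g h‖ ≤ C

/-- The `V`-component of `(0, a) * (0, b) * (0, c)` in the central extension of `G` by `V` defined
by the cocycle `ω`. -/
def tripleProduct {G V : Type*} [Mul G] [Add V] (ω : G → G → V) (a b c : G) : V :=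
  ω a b + ω (a * b) c

namespace IsBoundedDiagonalFreeCocycle

section Semigroup

variable {G V : Type*} [Semigroup G] [NormedAddCommGroup V] {ω : G → G → V}
  (hω : IsBoundedDiagonalFreeCocycle ω)
include hω

lemma semiconj_sub_mul_self {x a b : G} (h : SemiconjBy x a b) :
    ω x (a * a) - ω (b * b) x = (ω x a - ω b x) + (ω x a - ω b x) := by
  have hxaa : ω x a + ω (x * a) a = ω x (a * a) := by simpa [hω.self] using hω.cocycle x a a
  have hbxa : ω b x + ω (x * a) a = ω x a + ω b (x * a) := by
    simpa [h.eq] using hω.cocycle b x a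
  have hbbx : ω (b * b) x = ω b x + ω b (x * a) := by
    simpa [hω.self, h.eq] using hω.cocycle b b x
  rw [← hxaa, hbbx, eq_sub_of_add_eq' hbxa]
  abel

variable [NormedSpace ℝ V]

lemma eq_of_semiconjBy {x a b : G} (h : SemiconjBy x a b) : ω x a = ω b x := by
  obtain ⟨C, hC⟩ := hω.bounded
  refine sub_eq_zero.mp <| eq_zero_of_bounded_of_map_eq_smul (c := (2 : ℝ)) (by norm_num)
    (X := {p : G × G // SemiconjBy x p.1 p.2})
    (s := fun p => ⟨(p.1.1 * p.1.1, p.1.2 * p.1.2), p.2.mul_right p.2⟩)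
    (d := fun p => ω x p.1.1 - ω p.1.2 x)
    (fun p => (norm_sub_le _ _).trans (add_le_add (hC _ _) (hC _ _))) (fun p => ?_) ⟨(a, b), h⟩
  rw [two_smul]
  exact hω.semiconj_sub_mul_self p.2

lemma mul_self_mul_self_of_commute {a b : G} (h : Commute a b) :
    ω (a * a) (b * b) = ω a b + ω a b := by
  have swap : ω a (a * (b * b)) = ω (a * b * b) a := by
    rw [mul_assoc a b b]
    exact hω.eq_of_semiconjBy
      ((Commute.refl a).mul_right (h.mul_right h))
  calc
    ω (a * a) (b * b) = ω a (b * b) + ω a (a * (b * b)) := by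
      simpa [hω.self] using hω.cocycle a a (b * b)
    _ = ω a b + (ω (a * b) b + ω (a * b * b) a) := by
      rw [swap, ← add_assoc, hω.cocycle a b b, hω.self, zero_add]
    _ = ω a b + ω b a := by
      rw [hω.cocycle (a * b) b a, ← h.eq, hω.self, add_zero]
    _ = ω a b + ω a b := by rw [hω.eq_of_semiconjBy h]

lemma eq_zero_of_commute {a b : G} (h : Commute a b) : ω a b = 0 := by
  obtain ⟨C, hC⟩ := hω.bounded
  refine eq_zero_of_bounded_of_map_eq_smul (c := (2 : ℝ)) (by norm_num)
    (X := {p : G × G // Commute p.1 p.2})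
    (s := fun p => ⟨(p.1.1 * p.1.1, p.1.2 * p.1.2),
      (p.2.mul_left p.2).mul_right (p.2.mul_left p.2)⟩)
    (d := fun p => ω p.1.1 p.1.2) (fun p => hC _ _) (fun p => ?_) ⟨(a, b), h⟩
  rw [two_smul]
  exact hω.mul_self_mul_self_of_commute p.2

end Semigroup

section Group

variable {G V : Type*} [Group G] [NormedAddCommGroup V] [NormedSpace ℝ V] {ω : G → G → V}
  (hω : IsBoundedDiagonalFreeCocycle ω)
include hω

lemma apply_eq_of_conj_eq_left {x y : G} (h : MulAut.conj x = MulAut.conj y) (g : G) :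
    ω x g = ω y g := by
  have commute_z (u : G) : Commute (x * y⁻¹) u := by
    have hu : MulAut.conj (x * y⁻¹) u = u := by rw [map_mul, map_inv, h, mul_inv_cancel]; rfl
    exact mul_inv_eq_iff_eq_mul.mp hu
  have hz (u : G) : ω (x * y⁻¹) u = 0 := hω.eq_zero_of_commute (commute_z u)
  simpa [hz] using hω.cocycle (x * y⁻¹) y g

lemma apply_eq_of_conj_eq_right {x y : G} (h : MulAut.conj x = MulAut.conj y) (g : G) :
    ω g x = ω g y := by
  have commute_z (u : G) : Commute (y⁻¹ * x) u := by
    have hu : MulAut.conj (y⁻¹ * x) u = u := by rw [map_mul, map_inv, h, inv_mul_cancel]; rfl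
    exact mul_inv_eq_iff_eq_mul.mp hu
  have hz (u : G) : ω u (y⁻¹ * x) = 0 := hω.eq_zero_of_commute (commute_z u).symm
  simpa [hz] using (hω.cocycle g y (y⁻¹ * x)).symm

lemma tripleProduct_sub_of_conj_eq_left {a b a' b' : G}
    (h : MulAut.conj (a * b) = MulAut.conj (a' * b')) (c : G) :
    tripleProduct ω a b c - tripleProduct ω a' b' c = ω a b - ω a' b' := by
  rw [tripleProduct, tripleProduct, hω.apply_eq_of_conj_eq_left h c]
  abel

lemma tripleProduct_sub_of_conj_eq_right {b c b' c' : G}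
    (h : MulAut.conj (b * c) = MulAut.conj (b' * c')) (a : G) :
    tripleProduct ω a b c - tripleProduct ω a b' c' = ω b c - ω b' c' := by
  rw [tripleProduct, tripleProduct, hω.cocycle a b c, hω.cocycle a b' c',
    hω.apply_eq_of_conj_eq_right h a]
  abel

/-- Going from `(a, b, c)` to `(k, l, m)` through `(p, q, c)`, `(p, r, m)` gives the left-hand side,
going through `(a, k, s)`, `(k, t, s)` gives the right-hand side. -/
lemma hexagon {a b c k l m p q r s t : G}
    (hab : MulAut.conj (a * b) = MulAut.conj (p * q))
    (hqc : MulAut.conj (q * c) = MulAut.conj (r * m))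
    (hpr : MulAut.conj (p * r) = MulAut.conj (k * l))
    (hbc : MulAut.conj (b * c) = MulAut.conj (k * s))
    (hkt : SemiconjBy k t a)
    (hts : MulAut.conj (t * s) = MulAut.conj (l * m)) :
    (ω a b - ω p q) + (ω q c - ω r m) + (ω p r - ω k l) =
      (ω b c - ω k s) + (ω t s - ω l m) := by
  have swap : tripleProduct ω a k s = tripleProduct ω k t s := by
    rw [tripleProduct, tripleProduct, hω.eq_of_semiconjBy hkt, hkt.eq]
  rw [← hω.tripleProduct_sub_of_conj_eq_left hab c, ← hω.tripleProduct_sub_of_conj_eq_right hqc p,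
    ← hω.tripleProduct_sub_of_conj_eq_left hpr m, ← hω.tripleProduct_sub_of_conj_eq_right hbc a,
    ← hω.tripleProduct_sub_of_conj_eq_right hts k, swap]
  abel

lemma obstructionCochain_coboundary_eq_zero {P : Type*} [Semigroup P] {Ψ : P → MulAut G}
    {f : P → P → G} (hΨf : IsAbstractKernel Ψ f) (α β γ ζ : P) :
    obstructionCochain (fun g h => ω (Ψ α g) (Ψ α h)) Ψ f β γ ζ
        - obstructionCochain ω Ψ f (α * β) γ ζ + obstructionCochain ω Ψ f α (β * γ) ζ
        - obstructionCochain ω Ψ f α β (γ * ζ) + obstructionCochain ω Ψ f α β γ = 0 := by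
  have hab : MulAut.conj (Ψ α (Ψ β (f γ ζ)) * Ψ α (f β (γ * ζ))) =
      MulAut.conj (Ψ α (f β γ) * Ψ α (f (β * γ) ζ)) := by
    rw [← map_mul, ← map_mul, conj_mulAut_apply, hΨf.conj_mul_eq_conj_mul, ← conj_mulAut_apply]
  have hqc := hΨf.conj_mul_eq_conj_mul α (β * γ) ζ
  have hpr := hΨf.conj_mul_eq_conj_mul α β γ
  have hbc := hΨf.conj_mul_eq_conj_mul α β (γ * ζ)
  have hts := hΨf.conj_mul_eq_conj_mul (α * β) γ ζ
  simp only [obstructionCochain, mul_assoc] at hqc hpr hbc hts ⊢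
  have h := hω.hexagon hab hqc hpr hbc (hΨf.semiconjBy α β (f γ ζ)) hts
  linear_combination (norm := module) h

end Group

end IsBoundedDiagonalFreeCocycle

end BoundedCocycle

section Chains

variable {G : Type*} [Group G]

lemma norm_dirac (x : G × G) : ‖dirac x‖ = 1 := by
  classical
  simp [dirac, lp.norm_single]

lemma dirac_apply (x y : G × G) [Decidable (y = x)] : dirac x y = if y = x then 1 else 0 := by
  classical
  simp [dirac, Pi.single_apply]

lemma norm_mm_term (g : G) (n : ℕ) :
    ‖((1 : ℝ) / 2) ^ (n + 1) • dirac (g ^ 2 ^ n, g ^ 2 ^ n)‖ = 1 / 2 / 2 ^ n := by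
  rw [norm_smul, norm_dirac, mul_one, norm_pow, Real.norm_of_nonneg (by norm_num), pow_succ']
  simp [div_eq_mul_inv]

lemma summable_mm_term (g : G) :
    Summable fun n : ℕ => ((1 : ℝ) / 2) ^ (n + 1) • dirac (g ^ 2 ^ n, g ^ 2 ^ n) :=
  .of_norm <| (summable_geometric_two' 1).congr fun n => (norm_mm_term g n).symm

lemma norm_mm_le (g : G) : ‖mm g‖ ≤ 1 :=
  tsum_of_norm_bounded (hasSum_geometric_two' 1) fun n => (norm_mm_term g n).le

lemma mm_eq_half_smul_add (g : G) :
    mm g = ((1 : ℝ) / 2) • dirac (g, g) + ((1 : ℝ) / 2) • mm (g * g) := by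
  rw [mm, (summable_mm_term g).tsum_eq_zero_add, mm,
    ← (summable_mm_term (g * g)).tsum_const_smul]
  congr 1
  · simp
  · refine tsum_congr fun n => ?_
    rw [smul_smul, ← pow_succ' ((1 : ℝ) / 2), ← pow_two g, ← pow_mul, ← pow_succ']

lemma m2_self (g : G) : m2 g g = 0 := by
  rw [m2]
  linear_combination (norm := module) (-2 : ℝ) • mm_eq_half_smul_add g

lemma norm_m2_le (g h : G) : ‖m2 g h‖ ≤ 4 := by
  have h : ‖m2 g h‖ ≤ 1 + 1 + 1 + 1 :=
    norm_sub_le_of_le (norm_add_le_of_le (norm_sub_le_of_le (norm_dirac _).le (norm_mm_le _))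
      (norm_mm_le _)) (norm_mm_le _)
  linarith

lemma m2_coboundary (a b c : G) :
    m2 b c - m2 (a * b) c + m2 a (b * c) - m2 a b =
      dirac (b, c) - dirac (a * b, c) + dirac (a, b * c) - dirac (a, b) := by
  simp only [m2, mul_assoc]
  abel

/-- `pushAut` as a linear isometry, so that it can be moved inside the series defining `mm`. -/
def pushAutIsometry (φ : G ≃* G) :
    lp (fun _ : G × G => ℝ) 1 →ₗᵢ[ℝ] lp (fun _ : G × G => ℝ) 1 where
  toFun := pushAut φ
  map_add' _ _ := rfl
  map_smul' _ _ := rfl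
  norm_map' z := by
    change ‖pushAut φ z‖ = ‖z‖
    rw [lp.norm_eq_tsum_rpow (by norm_num), lp.norm_eq_tsum_rpow (by norm_num)]
    congr 1
    exact (Equiv.prodCongr φ.symm.toEquiv φ.symm.toEquiv).tsum_eq
      fun uv => ‖z uv‖ ^ (1 : ℝ≥0∞).toReal

lemma pushAutIsometry_dirac (φ : G ≃* G) (g h : G) :
    pushAutIsometry φ (dirac (g, h)) = dirac (φ g, φ h) := by
  classical
  ext ⟨u, v⟩
  change dirac (g, h) (φ.symm u, φ.symm v) = _
  simp only [dirac_apply, Prod.mk.injEq, MulEquiv.symm_apply_eq]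

lemma pushAutIsometry_mm (φ : G ≃* G) (g : G) : pushAutIsometry φ (mm g) = mm (φ g) := by
  have h := (pushAutIsometry φ).toContinuousLinearMap.map_tsum (summable_mm_term g)
  rw [mm, mm]
  simpa only [LinearIsometry.coe_toContinuousLinearMap, map_smul, pushAutIsometry_dirac,
    map_pow] using h

lemma pushAutIsometry_m2 (φ : G ≃* G) (g h : G) :
    pushAutIsometry φ (m2 g h) = m2 (φ g) (φ h) := by
  simp only [m2, map_add, map_sub, pushAutIsometry_dirac, pushAutIsometry_mm, map_mul]

lemma pushAut_obstructionCochain_m2 {P : Type*} [Mul P] (φ : G ≃* G) (Ψ : P → MulAut G)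
    (f : P → P → G) (α β γ : P) :
    pushAut φ (obstructionCochain m2 Ψ f α β γ) =
      obstructionCochain (fun g h => m2 (φ g) (φ h)) Ψ f α β γ := by
  change pushAutIsometry φ _ = _
  simp only [map_obstructionCochain, pushAutIsometry_m2]

/-- The closed subspace of `ℓ¹(G×G)` generated by the boundaries; the reduced homology
`H̄₂^{ℓ¹}(G,ℝ)` is a subspace of the quotient by it. -/
abbrev closedBoundaries (G : Type*) [Group G] : Submodule ℝ (lp (fun _ : G × G => ℝ) 1) :=
  (Submodule.span ℝ (B2 G)).topologicalClosure

instance : IsClosed (closedBoundaries G : Set (lp (fun _ : G × G => ℝ) 1)) :=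
  Submodule.isClosed_topologicalClosure _

lemma isBoundedDiagonalFreeCocycle_mkQ_m2 :
    IsBoundedDiagonalFreeCocycle fun g h : G => (closedBoundaries G).mkQ (m2 g h) where
  cocycle a b c := by
    have hB : m2 b c - m2 (a * b) c + m2 a (b * c) - m2 a b ∈ closedBoundaries G :=
      Submodule.le_topologicalClosure _ <| Submodule.subset_span ⟨a, b, c, m2_coboundary a b c⟩
    have hq := (Submodule.Quotient.mk_eq_zero _).mpr hB
    rw [← Submodule.mkQ_apply, map_sub, map_add, map_sub] at hq
    linear_combination (norm := module) -hq
  self g := by rw [m2_self, map_zero]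
  bounded := ⟨4, fun g h => (Submodule.Quotient.norm_mk_le _ _).trans (norm_m2_le g h)⟩

end Chains

theorem stmt_18_general {G P : Type*} [Group G] [Semigroup P] {Ψ : P → MulAut G} {f : P → P → G}
    (hΨf : IsAbstractKernel Ψ f) (α β γ ζ : P) :
    pushAut (Ψ α) (obstructionCochain m2 Ψ f β γ ζ) - obstructionCochain m2 Ψ f (α * β) γ ζ
        + obstructionCochain m2 Ψ f α (β * γ) ζ - obstructionCochain m2 Ψ f α β (γ * ζ)
        + obstructionCochain m2 Ψ f α β γ ∈ closedBoundaries G := by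
  rw [← Submodule.Quotient.mk_eq_zero, ← Submodule.mkQ_apply, pushAut_obstructionCochain_m2]
  simpa only [map_add, map_sub, map_obstructionCochain] using
    isBoundedDiagonalFreeCocycle_mkQ_m2.obstructionCochain_coboundary_eq_zero hΨf α β γ ζ

/-- the coboundary of the `ℓ¹`-chain-valued cochain `θ` associated to an
abstract kernel `(Ψ, f)` takes values in the closure of the span of the boundaries `B₂`;
hence `θ` induces a bounded 3-cocycle of `Π` with coefficients in `H̄₂^{ℓ¹}(G,ℝ)`,
representing the class `[θ]`. -/
theorem stmt_18 {G P : Type*} [Group G] [Group P]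
    (Ψ : P → G ≃* G) (f : P → P → G)
    (hkernel : ∀ (α β : P) (g : G),
      Ψ α (Ψ β g) = f α β * Ψ (α * β) g * (f α β)⁻¹) :
    ∀ α β γ ζ : P,
      pushAut (Ψ α) (thetaChain Ψ f β γ ζ) - thetaChain Ψ f (α * β) γ ζ
          + thetaChain Ψ f α (β * γ) ζ - thetaChain Ψ f α β (γ * ζ)
          + thetaChain Ψ f α β γ ∈
        closure ((Submodule.span ℝ (B2 G) : Submodule ℝ _) :
          Set (lp (fun _ : G × G => ℝ) 1)) := by
  exact stmt_18_general fun α β => MulEquiv.ext (hkernel α β)
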